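/- Let σ > 0, Υ > 0, K ∈ ℕ and 0 < S_1 < ⋯ < S_K < 1 be fixed, and set i(k) = ⌈nS_k⌉. For each n let V_n(σ) be the n×n symmetric tridiagonal matrix with entries V_n(σ)^{11} = σ²/n + Υ, V_n(σ)^{ii} = σ²/n + 2Υ for 2 ≤ i ≤ n, V_n(σ)^{ij} = −Υ for |i−j| = 1, and V_n(σ)^{ij} = 0 otherwise. Then V_n(σ) is positive definite, and for all k, l ∈ {1,…,K}, n^{−1/2} (V_n(σ)^{−1})_{i(k), i(l)} → (2σ√Υ)^{−1} 1_{{k=l}} as n→∞. Consequently, if ξ_n ∼ N(0, V_n(σ)) and γ̂^n_k = 2σ√Υ · n^{−1/2} (V_n(σ)^{−1} ξ_n)_{i(k)}, then √n · Cov(γ̂^n_k, γ̂^n_l) → 2σ√Υ · 1_{{k=l}}. -/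

import Mathlib

open Real Filter MeasureTheory Matrix

/-- The symmetric tridiagonal covariance matrix `V_n(σ)` (0-indexed version of the
1-indexed matrix in the statement): `V^{11} = σ²/n + Υ`, `V^{ii} = σ²/n + 2Υ` for
`2 ≤ i ≤ n`, `V^{ij} = -Υ` for `|i-j| = 1`, and `0` otherwise. -/
noncomputable def Vmat (σ Υ : ℝ) (n : ℕ) : Matrix (Fin n) (Fin n) ℝ :=
  fun i j =>
    if i = j then (if (i : ℕ) = 0 then σ ^ 2 / n + Υ else σ ^ 2 / n + 2 * Υ)
    else if (i : ℕ) + 1 = (j : ℕ) ∨ (j : ℕ) + 1 = (i : ℕ) then -Υ else 0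

/-- The `(i,j)` entry of an `n×n` matrix in 1-based indexing (`0` out of range). -/
def matEntry1 {n : ℕ} (M : Matrix (Fin n) (Fin n) ℝ) (i j : ℕ) : ℝ :=
  if h : 1 ≤ i ∧ i ≤ n ∧ 1 ≤ j ∧ j ≤ n then
    M ⟨i - 1, by omega⟩ ⟨j - 1, by omega⟩ else 0

/-- The `i`-th entry of a vector of length `n` in 1-based indexing (`0` out of range). -/
def vecEntry1 {n : ℕ} (v : Fin n → ℝ) (i : ℕ) : ℝ :=
  if h : 1 ≤ i ∧ i ≤ n then v ⟨i - 1, by omega⟩ else 0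

/-!
Write `V_n(σ) = (σ²/n) I + Υ D Dᵀ`. Extending a vector of length `n` to the integers, `D Dᵀ` is the
negative discrete Laplacian with a Neumann condition on the left (equal values at `-1` and `0`) and
a Dirichlet condition on the right (value `0` at `n`). If `θ` is given by `Υ (2 cosh θ - 2) = σ²/n`,
the free equation reads `2 cosh θ f(i) = f(i-1) + f(i+1)`, and the method of images gives
`V_n(σ)⁻¹ i j = (sinh ((n+½-|i-j|)θ) + sinh ((n-½-i-j)θ)) / (2 Υ sinh θ cosh ((n+½)θ))`
in 0-based indices. Since `θ ~ σ/√(Υn)`, the prefactor `1/(2 Υ sinh θ)` is asymptotic to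
`√n/(2σ√Υ)`, while `nθ → ∞`: at indices `~ ns` and `~ nt` the quotient by the hyperbolic cosine is
exponentially small, except for its first term when `i = j`, which tends to `1`.
-/

section DifferenceMatrix

/-- The `n × n` backward difference matrix `D_n`, with `1` on the diagonal and `-1` on the
subdiagonal; it factors `V_n(σ)` as `(σ²/n) I + Υ D Dᵀ`. -/
def diffMatrix (R : Type*) [CommRing R] (n : ℕ) : Matrix (Fin n) (Fin n) R :=
  fun i k => (if k = i then 1 else 0) - (if (k : ℕ) + 1 = (i : ℕ) then 1 else 0)

variable {R : Type*} [CommRing R] {n : ℕ}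

lemma diffMatrix_mulVec_apply (v : Fin n → R) (i : Fin n) :
    (diffMatrix R n *ᵥ v) i = v i - if h : 1 ≤ (i : ℕ) then v ⟨i - 1, by omega⟩ else 0 := by
  have hpred : ∑ k : Fin n, (if (k : ℕ) + 1 = (i : ℕ) then v k else 0) =
      if h : 1 ≤ (i : ℕ) then v ⟨i - 1, by omega⟩ else 0 := by
    split_ifs with h
    · have hk (k : Fin n) : (k : ℕ) + 1 = i ↔ k = ⟨i - 1, by omega⟩ := by
        rw [Fin.ext_iff]; dsimp only; omega
      simp [hk]
    · exact Finset.sum_eq_zero fun k _ => if_neg (by omega)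
  simp [diffMatrix, Matrix.mulVec, dotProduct, sub_mul, Finset.sum_sub_distrib, hpred]

lemma diffMatrix_transpose_mulVec_apply (v : Fin n → R) (i : Fin n) :
    ((diffMatrix R n)ᵀ *ᵥ v) i = v i - if h : (i : ℕ) + 1 < n then v ⟨i + 1, h⟩ else 0 := by
  have hsucc : ∑ k : Fin n, (if (i : ℕ) + 1 = (k : ℕ) then v k else 0) =
      if h : (i : ℕ) + 1 < n then v ⟨i + 1, h⟩ else 0 := by
    split_ifs with h
    · have hk (k : Fin n) : (i : ℕ) + 1 = k ↔ k = ⟨i + 1, h⟩ := by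
        rw [Fin.ext_iff]; dsimp only; omega
      simp [hk]
    · exact Finset.sum_eq_zero fun k _ => if_neg (by omega)
  simp [diffMatrix, Matrix.mulVec, dotProduct, sub_mul, Finset.sum_sub_distrib, hsucc]

lemma diffMatrix_mul_transpose_mulVec_apply {f : ℤ → R} (hleft : f (-1) = f 0) (hright : f n = 0)
    (i : Fin n) :
    ((diffMatrix R n * (diffMatrix R n)ᵀ) *ᵥ fun k => f k) i = 2 * f i - f (i - 1) - f (i + 1) := by
  have hT : ((diffMatrix R n)ᵀ *ᵥ fun k => f k) = fun k : Fin n => f k - f (k + 1) := by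
    ext k
    rw [diffMatrix_transpose_mulVec_apply]
    split_ifs with h
    · simp
    · have hk : (k : ℤ) + 1 = n := by omega
      rw [hk, hright]
  rw [← Matrix.mulVec_mulVec, hT, diffMatrix_mulVec_apply]
  split_ifs with h
  · simp only [Nat.cast_sub h, Nat.cast_one, sub_add_cancel]
    ring
  · have hi : (i : ℤ) = 0 := by omega
    simp only [hi, zero_sub, hleft]
    ring

end DifferenceMatrix

lemma Vmat_eq_smul_one_add (σ Υ : ℝ) (n : ℕ) :
    Vmat σ Υ n = (σ ^ 2 / n) • 1 + Υ • (diffMatrix ℝ n * (diffMatrix ℝ n)ᵀ) := by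
  ext i j
  have hmul : (diffMatrix ℝ n * (diffMatrix ℝ n)ᵀ) i j =
      (diffMatrix ℝ n *ᵥ diffMatrix ℝ n j) i := rfl
  rw [Matrix.add_apply, Matrix.smul_apply, Matrix.smul_apply, hmul, diffMatrix_mulVec_apply]
  simp only [Vmat, Matrix.one_apply, diffMatrix, smul_eq_mul, Fin.ext_iff]
  split_ifs <;> first | omega | ring

lemma Vmat_posDef {σ Υ : ℝ} (hσ : 0 < σ) (hΥ : 0 < Υ) (n : ℕ) : (Vmat σ Υ n).PosDef := by
  rcases n.eq_zero_or_pos with rfl | hn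
  · exact Subsingleton.elim 1 (Vmat σ Υ 0) ▸ Matrix.PosDef.one
  · rw [Vmat_eq_smul_one_add]
    exact (Matrix.PosDef.one.smul (by positivity)).add_posSemidef
      ((Matrix.posSemidef_self_mul_conjTranspose (diffMatrix ℝ n)).smul hΥ.le)

lemma Vmat_mulVec_apply (σ Υ : ℝ) {n : ℕ} {f : ℤ → ℝ} (hleft : f (-1) = f 0) (hright : f n = 0)
    (i : Fin n) :
    (Vmat σ Υ n *ᵥ fun k => f k) i =
      σ ^ 2 / n * f i + Υ * (2 * f i - f (i - 1) - f (i + 1)) := by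
  rw [Vmat_eq_smul_one_add, Matrix.add_mulVec, Matrix.smul_mulVec, Matrix.smul_mulVec,
    Matrix.one_mulVec, Pi.add_apply, Pi.smul_apply, Pi.smul_apply,
    diffMatrix_mul_transpose_mulVec_apply hleft hright, smul_eq_mul, smul_eq_mul]

section GreenKernel

/-- The Green function, with pole at `y`, of `f ↦ 2 cosh θ f(x) - f(x - 1) - f(x + 1)` under a
Neumann condition at `-1/2` and a Dirichlet condition at `L`, obtained by the method of images. -/
noncomputable def greenKernel (θ L x y : ℝ) : ℝ :=
  (sinh ((L + 1 / 2 - |x - y|) * θ) + sinh ((L - 1 / 2 - x - y) * θ)) /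
    (2 * sinh θ * cosh ((L + 1 / 2) * θ))

lemma greenKernel_neg_one_left (θ L : ℝ) {y : ℝ} (hy : 0 ≤ y) :
    greenKernel θ L (-1) y = greenKernel θ L 0 y := by
  have h1 : |-1 - y| = y + 1 := by rw [abs_of_neg (by linarith)]; ring
  have h0 : |0 - y| = y := by rw [zero_sub, abs_neg, abs_of_nonneg hy]
  rw [greenKernel, greenKernel, h1, h0, add_comm (sinh _)]
  ring_nf

lemma greenKernel_right_endpoint (θ : ℝ) {L y : ℝ} (hy : y ≤ L) : greenKernel θ L L y = 0 := by
  have hodd : (L - 1 / 2 - L - y) * θ = -((L + 1 / 2 - (L - y)) * θ) := by ring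
  rw [greenKernel, abs_of_nonneg (sub_nonneg.mpr hy), hodd, sinh_neg, add_neg_cancel, zero_div]

lemma sinh_sub_one_mul_add_sinh_add_one_mul (x θ : ℝ) :
    sinh ((x - 1) * θ) + sinh ((x + 1) * θ) = 2 * cosh θ * sinh (x * θ) := by
  rw [sub_mul, add_mul, one_mul, sinh_sub, sinh_add]
  ring

lemma greenKernel_equation {θ : ℝ} (hθ : θ ≠ 0) (L : ℝ) (i j : ℤ) :
    2 * cosh θ * greenKernel θ L i j - greenKernel θ L (i - 1) j - greenKernel θ L (i + 1) j =
      if i = j then 1 else 0 := by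
  have hsinh : sinh θ ≠ 0 := sinh_ne_zero.mpr hθ
  have hcosh : cosh ((L + 1 / 2) * θ) ≠ 0 := (cosh_pos _).ne'
  have himage := sinh_sub_one_mul_add_sinh_add_one_mul (L - 1 / 2 - i - j) θ
  have hpole : 2 * cosh θ * sinh ((L + 1 / 2 - |(i : ℝ) - j|) * θ)
      - sinh ((L + 1 / 2 - |(i : ℝ) - 1 - j|) * θ) - sinh ((L + 1 / 2 - |(i : ℝ) + 1 - j|) * θ) =
      if i = j then 2 * sinh θ * cosh ((L + 1 / 2) * θ) else 0 := by
    rcases lt_trichotomy i j with h | rfl | h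
    · have hle : (i : ℝ) + 1 ≤ j := mod_cast h
      rw [if_neg h.ne, abs_of_nonpos (by linarith), abs_of_nonpos (by linarith),
        abs_of_nonpos (by linarith), ← sinh_sub_one_mul_add_sinh_add_one_mul]
      ring_nf
    · have hprev : |(i : ℝ) - 1 - i| = 1 := by norm_num
      have hnext : |(i : ℝ) + 1 - i| = 1 := by norm_num
      rw [if_pos rfl, sub_self, abs_zero, sub_zero, hprev, hnext, sub_one_mul, sinh_sub]
      ring
    · have hle : (j : ℝ) + 1 ≤ i := mod_cast h
      rw [if_neg h.ne', abs_of_nonneg (by linarith), abs_of_nonneg (by linarith),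
        abs_of_nonneg (by linarith), ← sinh_sub_one_mul_add_sinh_add_one_mul]
      ring_nf
  have hprev : L - 1 / 2 - ((i : ℝ) - 1) - j = L - 1 / 2 - i - j + 1 := by ring
  have hnext : L - 1 / 2 - ((i : ℝ) + 1) - j = L - 1 / 2 - i - j - 1 := by ring
  simp only [greenKernel, hprev, hnext]
  rw [← mul_div_assoc, ← sub_div, ← sub_div,
    div_eq_iff (mul_ne_zero (mul_ne_zero two_ne_zero hsinh) hcosh), ite_mul, one_mul, zero_mul,
    ← hpole]
  linear_combination -himage

lemma two_mul_sinh_mul_greenKernel {θ : ℝ} (hθ : θ ≠ 0) (L x y : ℝ) :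
    2 * sinh θ * greenKernel θ L x y =
      sinh ((L + 1 / 2 - |x - y|) * θ) / cosh ((L + 1 / 2) * θ) +
        sinh ((L - 1 / 2 - x - y) * θ) / cosh ((L + 1 / 2) * θ) := by
  have hsinh : sinh θ ≠ 0 := sinh_ne_zero.mpr hθ
  rw [greenKernel]
  field_simp

end GreenKernel

section Inverse

/-- The rate `θ` at which the entries of `V_n(σ)⁻¹` decay off the diagonal: the nonnegative solution
of `Υ (2 cosh θ - 2) = σ²/n`, that is, of `2 sinh (θ/2) = σ/√(Υn)`. -/
noncomputable def decayRate (σ Υ : ℝ) (n : ℕ) : ℝ := 2 * arsinh (σ / (2 * √(Υ * n)))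

variable {σ Υ : ℝ} {n : ℕ}

lemma decayRate_pos (hσ : 0 < σ) (hΥ : 0 < Υ) (hn : 0 < n) : 0 < decayRate σ Υ n :=
  mul_pos two_pos (arsinh_pos_iff.mpr (by positivity))

lemma sinh_half_decayRate (σ Υ : ℝ) (n : ℕ) :
    sinh (decayRate σ Υ n / 2) = σ / (2 * √(Υ * n)) := by
  rw [decayRate, mul_div_cancel_left₀ _ two_ne_zero, sinh_arsinh]

lemma mul_cosh_decayRate (hΥ : 0 < Υ) :
    Υ * (2 * cosh (decayRate σ Υ n) - 2) = σ ^ 2 / n := by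
  have hdouble : 2 * cosh (decayRate σ Υ n) - 2 = 4 * sinh (decayRate σ Υ n / 2) ^ 2 := by
    conv_lhs => rw [← mul_div_cancel₀ (decayRate σ Υ n) two_ne_zero, cosh_two_mul, cosh_sq]
    ring
  rw [hdouble, sinh_half_decayRate, div_pow, mul_pow, sq_sqrt (by positivity)]
  field_simp
  ring

theorem inv_Vmat (hσ : 0 < σ) (hΥ : 0 < Υ) :
    (Vmat σ Υ n)⁻¹ = Matrix.of fun i j : Fin n => Υ⁻¹ * greenKernel (decayRate σ Υ n) n i j := by
  apply Matrix.inv_eq_right_inv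
  ext i j
  have hrow := Vmat_mulVec_apply σ Υ
    (f := fun k => Υ⁻¹ * greenKernel (decayRate σ Υ n) n k j)
    (by simp [greenKernel_neg_one_left]) (by simp [greenKernel_right_endpoint, j.is_lt.le]) i
  have heq := greenKernel_equation (decayRate_pos hσ hΥ i.pos).ne' n i j
  simp only [Int.cast_natCast, Int.cast_sub, Int.cast_add, Int.cast_one] at hrow heq
  have hone : (1 : Matrix (Fin n) (Fin n) ℝ) i j =
      if ((i : ℕ) : ℤ) = (j : ℕ) then 1 else 0 := by
    simp [Matrix.one_apply, Fin.ext_iff]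
  refine hrow.trans ?_
  rw [hone, ← heq, ← mul_cosh_decayRate hΥ]
  field_simp
  ring

lemma matEntry1_inv_Vmat (hσ : 0 < σ) (hΥ : 0 < Υ) {i j : ℕ} (hi : i ∈ Set.Icc 1 n)
    (hj : j ∈ Set.Icc 1 n) :
    matEntry1 (Vmat σ Υ n)⁻¹ i j = Υ⁻¹ * greenKernel (decayRate σ Υ n) n (i - 1) (j - 1) := by
  rw [matEntry1, dif_pos ⟨hi.1, hi.2, hj.1, hj.2⟩, inv_Vmat hσ hΥ]
  simp [Nat.cast_sub hi.1, Nat.cast_sub hj.1]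

end Inverse

section HyperbolicLimits

variable {α : Type*} {l : Filter α}

lemma abs_sinh_div_cosh_le (x y : ℝ) : |sinh x / cosh y| ≤ exp (-(y - |x|)) := by
  have hsinh : 2 * sinh |x| ≤ exp |x| := by
    rw [sinh_eq]; linarith [exp_pos (-|x|)]
  have hcosh : exp y ≤ 2 * cosh y := by
    rw [cosh_eq]; linarith [exp_pos (-y)]
  rw [abs_div, abs_sinh, abs_of_pos (cosh_pos y), neg_sub, exp_sub,
    div_le_div_iff₀ (cosh_pos y) (exp_pos y)]
  nlinarith [mul_le_mul hsinh hcosh (exp_pos y).le (exp_pos _).le]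

lemma tendsto_sinh_div_cosh_zero {x y : α → ℝ} (h : Tendsto (fun a => y a - |x a|) l atTop) :
    Tendsto (fun a => sinh (x a) / cosh (y a)) l (nhds 0) :=
  squeeze_zero_norm (fun _ => abs_sinh_div_cosh_le _ _) (tendsto_exp_neg_atTop_nhds_zero.comp h)

lemma tendsto_tanh_atTop : Tendsto tanh atTop (nhds 1) := by
  have hexp : Tendsto (fun x => exp (-x) / cosh x) atTop (nhds 0) :=
    squeeze_zero (fun x => by positivity) (fun x => div_le_self (exp_pos _).le (one_le_cosh x))
      tendsto_exp_neg_atTop_nhds_zero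
  have htanh (x : ℝ) : 1 - exp (-x) / cosh x = tanh x := by
    rw [tanh_eq_sinh_div_cosh, ← cosh_sub_sinh, sub_div, div_self (cosh_pos x).ne']
    ring
  simpa only [htanh, sub_zero] using hexp.const_sub 1

lemma tendsto_sinh_mul_div_cosh_mul_zero {r x y θ : α → ℝ} {c d : ℝ}
    (hx : Tendsto (fun a => x a / r a) l (nhds c)) (hy : Tendsto (fun a => y a / r a) l (nhds d))
    (hcd : |c| < d) (hr : ∀ᶠ a in l, 0 < r a)
    (hrθ : Tendsto (fun a => r a * θ a) l atTop) :
    Tendsto (fun a => sinh (x a * θ a) / cosh (y a * θ a)) l (nhds 0) := by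
  apply tendsto_sinh_div_cosh_zero
  refine ((hy.sub hx.abs).pos_mul_atTop (sub_pos.mpr hcd) hrθ).congr' ?_
  filter_upwards [hr, hrθ.eventually_gt_atTop 0] with a ha haθ
  rw [abs_mul, abs_of_pos (pos_of_mul_pos_right haθ ha.le), abs_div, abs_of_pos ha]
  field_simp

lemma tendsto_mul_arsinh_div_atTop (c : ℝ) :
    Tendsto (fun y => y * arsinh (c / y)) atTop (nhds c) := by
  have hderiv : HasDerivAt (fun t => arsinh (c * t)) c 0 := by
    simpa using ((hasDerivAt_id (0 : ℝ)).const_mul c).arsinh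
  simpa [Function.comp_def, div_eq_mul_inv] using
    hderiv.tendsto_slope_zero_right.comp tendsto_inv_atTop_nhdsGT_zero

end HyperbolicLimits

section GreenKernelLimits

variable {θ x y : ℕ → ℝ} {s t : ℝ}

lemma tendsto_natCast_add_const_div (c : ℝ) :
    Tendsto (fun n : ℕ => ((n : ℝ) + c) / n) atTop (nhds 1) := by
  simpa using (tendsto_natCast_div_add_atTop c).inv₀ one_ne_zero

lemma tendsto_sinh_direct_term (hθ : Tendsto (fun n : ℕ => n * θ n) atTop atTop)
    (hx : Tendsto (fun n : ℕ => x n / n) atTop (nhds s))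
    (hy : Tendsto (fun n : ℕ => y n / n) atTop (nhds t))
    (hst : |s - t| ∈ Set.Ioo 0 2) :
    Tendsto (fun n : ℕ => sinh ((n + 1 / 2 - |x n - y n|) * θ n) / cosh ((n + 1 / 2) * θ n)) atTop
      (nhds 0) := by
  have hdist : Tendsto (fun n : ℕ => (n + 1 / 2 - |x n - y n|) / (n : ℝ)) atTop
      (nhds (1 - |s - t|)) := by
    refine ((tendsto_natCast_add_const_div (1 / 2)).sub (hx.sub hy).abs).congr fun n => ?_
    rw [← sub_div, abs_div, Nat.abs_cast, sub_div]
  exact tendsto_sinh_mul_div_cosh_mul_zero hdist (tendsto_natCast_add_const_div (1 / 2))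
    (abs_lt.mpr ⟨by linarith [hst.2], by linarith [hst.1]⟩)
    ((eventually_gt_atTop 0).mono fun n hn => Nat.cast_pos.mpr hn) hθ

lemma tendsto_sinh_image_term (hθ : Tendsto (fun n : ℕ => n * θ n) atTop atTop)
    (hx : Tendsto (fun n : ℕ => x n / n) atTop (nhds s))
    (hy : Tendsto (fun n : ℕ => y n / n) atTop (nhds t))
    (hst : s + t ∈ Set.Ioo 0 2) :
    Tendsto (fun n : ℕ => sinh ((n - 1 / 2 - x n - y n) * θ n) / cosh ((n + 1 / 2) * θ n)) atTop
      (nhds 0) := by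
  have hdist : Tendsto (fun n : ℕ => (n - 1 / 2 - x n - y n) / (n : ℝ)) atTop
      (nhds (1 - s - t)) :=
    (((tendsto_natCast_add_const_div (-(1 / 2))).sub hx).sub hy).congr fun n => by ring
  exact tendsto_sinh_mul_div_cosh_mul_zero hdist (tendsto_natCast_add_const_div (1 / 2))
    (abs_lt.mpr ⟨by linarith [hst.2], by linarith [hst.1]⟩)
    ((eventually_gt_atTop 0).mono fun n hn => Nat.cast_pos.mpr hn) hθ

lemma eventually_two_mul_sinh_mul_greenKernel
    (hθ : Tendsto (fun n : ℕ => n * θ n) atTop atTop) (x y : ℕ → ℝ) :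
    ∀ᶠ n : ℕ in atTop,
      sinh ((n + 1 / 2 - |x n - y n|) * θ n) / cosh ((n + 1 / 2) * θ n) +
        sinh ((n - 1 / 2 - x n - y n) * θ n) / cosh ((n + 1 / 2) * θ n) =
      2 * sinh (θ n) * greenKernel (θ n) n (x n) (y n) := by
  filter_upwards [hθ.eventually_ne_atTop 0] with n hn
  exact (two_mul_sinh_mul_greenKernel (right_ne_zero_of_mul hn) n (x n) (y n)).symm

lemma tendsto_sinh_mul_greenKernel_of_ne (hθ : Tendsto (fun n : ℕ => n * θ n) atTop atTop)
    (hx : Tendsto (fun n : ℕ => x n / n) atTop (nhds s))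
    (hy : Tendsto (fun n : ℕ => y n / n) atTop (nhds t))
    (hs : s ∈ Set.Ioo 0 1) (ht : t ∈ Set.Ioo 0 1) (hst : s ≠ t) :
    Tendsto (fun n : ℕ => 2 * sinh (θ n) * greenKernel (θ n) n (x n) (y n)) atTop (nhds 0) := by
  have hdist : |s - t| < 2 :=
    abs_sub_lt_iff.mpr ⟨by linarith [hs.2, ht.1], by linarith [hs.1, ht.2]⟩
  have hsum := (tendsto_sinh_direct_term hθ hx hy ⟨abs_sub_pos.mpr hst, hdist⟩).add
    (tendsto_sinh_image_term hθ hx hy ⟨by linarith [hs.1, ht.1], by linarith [hs.2, ht.2]⟩)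
  rw [add_zero] at hsum
  exact hsum.congr' (eventually_two_mul_sinh_mul_greenKernel hθ x y)

lemma tendsto_sinh_mul_greenKernel_self (hθ : Tendsto (fun n : ℕ => n * θ n) atTop atTop)
    (hx : Tendsto (fun n : ℕ => x n / n) atTop (nhds s)) (hs : s ∈ Set.Ioo 0 1) :
    Tendsto (fun n : ℕ => 2 * sinh (θ n) * greenKernel (θ n) n (x n) (x n)) atTop (nhds 1) := by
  have hlength : Tendsto (fun n : ℕ => ((n : ℝ) + 1 / 2) * θ n) atTop atTop := by
    refine ((tendsto_natCast_add_const_div (1 / 2)).pos_mul_atTop one_pos hθ).congr' ?_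
    filter_upwards [eventually_gt_atTop 0] with n hn
    field_simp
  have hdirect : Tendsto (fun n : ℕ =>
      sinh ((n + 1 / 2 - |x n - x n|) * θ n) / cosh ((n + 1 / 2) * θ n)) atTop (nhds 1) := by
    simpa only [Function.comp_def, sub_self, abs_zero, sub_zero, tanh_eq_sinh_div_cosh] using
      tendsto_tanh_atTop.comp hlength
  have hsum := hdirect.add
    (tendsto_sinh_image_term hθ hx hx ⟨by linarith [hs.1], by linarith [hs.2]⟩)
  rw [add_zero] at hsum
  exact hsum.congr' (eventually_two_mul_sinh_mul_greenKernel hθ x x)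

end GreenKernelLimits

section InverseLimits

variable {σ Υ s t : ℝ}

lemma tendsto_sqrt_mul_decayRate (σ : ℝ) (hΥ : 0 < Υ) :
    Tendsto (fun n : ℕ => √n * decayRate σ Υ n) atTop (nhds (σ / √Υ)) := by
  have harsinh := (tendsto_mul_arsinh_div_atTop (σ / (2 * √Υ))).comp
    (tendsto_sqrt_atTop.comp tendsto_natCast_atTop_atTop)
  have hlim : 2 * (σ / (2 * √Υ)) = σ / √Υ := by ring
  rw [← hlim]
  refine (harsinh.const_mul 2).congr fun n => ?_
  simp only [Function.comp_apply, decayRate, sqrt_mul hΥ.le, div_div, mul_assoc]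
  ring

lemma tendsto_natCast_mul_decayRate (hσ : 0 < σ) (hΥ : 0 < Υ) :
    Tendsto (fun n : ℕ => n * decayRate σ Υ n) atTop atTop := by
  refine (Tendsto.atTop_mul_pos (div_pos hσ (sqrt_pos.mpr hΥ))
    (tendsto_sqrt_atTop.comp tendsto_natCast_atTop_atTop)
    (tendsto_sqrt_mul_decayRate σ hΥ)).congr fun n => ?_
  rw [Function.comp_apply, ← mul_assoc, mul_self_sqrt n.cast_nonneg]

lemma tendsto_cosh_half_decayRate (σ : ℝ) (hΥ : 0 < Υ) :
    Tendsto (fun n : ℕ => cosh (decayRate σ Υ n / 2)) atTop (nhds 1) := by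
  have hsmall : Tendsto (fun n : ℕ => σ / (2 * √(Υ * n))) atTop (nhds 0) :=
    ((tendsto_sqrt_atTop.comp (tendsto_natCast_atTop_atTop.const_mul_atTop hΥ)).const_mul_atTop
      two_pos).const_div_atTop σ
  have hcosh := (continuous_cosh.tendsto _).comp hsmall.arsinh
  rw [arsinh_zero, cosh_zero] at hcosh
  exact hcosh.congr fun n => by simp [decayRate]

lemma rpow_neg_half_mul_inv_eq (hσ : 0 < σ) (hΥ : 0 < Υ) {n : ℕ} (hn : 0 < n) :
    (n : ℝ) ^ (-(1 / 2) : ℝ) * Υ⁻¹ =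
      (2 * σ * √Υ * cosh (decayRate σ Υ n / 2))⁻¹ * (2 * sinh (decayRate σ Υ n)) := by
  have hdouble : sinh (decayRate σ Υ n) =
      2 * (σ / (2 * √(Υ * n))) * cosh (decayRate σ Υ n / 2) := by
    rw [← sinh_half_decayRate, ← sinh_two_mul, mul_div_cancel₀ _ two_ne_zero]
  have hcosh : cosh (decayRate σ Υ n / 2) ≠ 0 := (cosh_pos _).ne'
  have hsq : √Υ ^ 2 = Υ := sq_sqrt hΥ.le
  rw [hdouble, rpow_neg n.cast_nonneg, ← sqrt_eq_rpow, sqrt_mul hΥ.le]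
  field_simp
  rw [hsq]

lemma sqrt_mul_rpow_neg_half_sq {x : ℝ} (hx : 0 ≤ x) :
    √x * (x ^ (-(1 / 2) : ℝ)) ^ 2 = x ^ (-(1 / 2) : ℝ) := by
  rw [rpow_neg hx, ← sqrt_eq_rpow]
  rcases eq_or_ne (√x) 0 with h | h
  · simp [h]
  · field_simp

lemma tendsto_natCeil_sub_one_div (hs : 0 ≤ s) :
    Tendsto (fun n : ℕ => ((⌈(n : ℝ) * s⌉₊ : ℝ) - 1) / n) atTop (nhds s) := by
  have hceil := (tendsto_nat_ceil_mul_div_atTop hs).comp (tendsto_natCast_atTop_atTop (R := ℝ))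
  simpa [Function.comp_def, mul_comm, sub_div] using
    hceil.sub tendsto_one_div_atTop_nhds_zero_nat

lemma natCeil_mul_mem_Icc (hs : s ∈ Set.Ioo 0 1) {n : ℕ} (hn : 0 < n) :
    ⌈(n : ℝ) * s⌉₊ ∈ Set.Icc 1 n :=
  ⟨Nat.one_le_ceil_iff.mpr (mul_pos (Nat.cast_pos.mpr hn) hs.1),
    Nat.ceil_le.mpr (mul_le_of_le_one_right n.cast_nonneg hs.2.le)⟩

theorem tendsto_matEntry1_inv_Vmat (hσ : 0 < σ) (hΥ : 0 < Υ) (hs : s ∈ Set.Ioo 0 1)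
    (ht : t ∈ Set.Ioo 0 1) :
    Tendsto (fun n : ℕ => (n : ℝ) ^ (-(1 / 2) : ℝ) *
        matEntry1 (Vmat σ Υ n)⁻¹ ⌈(n : ℝ) * s⌉₊ ⌈(n : ℝ) * t⌉₊)
      atTop (nhds (if s = t then (2 * σ * √Υ)⁻¹ else 0)) := by
  have hθ := tendsto_natCast_mul_decayRate hσ hΥ
  have hx := tendsto_natCeil_sub_one_div hs.1.le
  have hkernel : Tendsto (fun n : ℕ => 2 * sinh (decayRate σ Υ n) * greenKernel (decayRate σ Υ n) n
      (⌈(n : ℝ) * s⌉₊ - 1) (⌈(n : ℝ) * t⌉₊ - 1)) atTop (nhds (if s = t then 1 else 0)) := by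
    split_ifs with hst
    · exact hst ▸ tendsto_sinh_mul_greenKernel_self hθ hx hs
    · exact tendsto_sinh_mul_greenKernel_of_ne hθ hx (tendsto_natCeil_sub_one_div ht.1.le) hs ht hst
  have hprefactor := ((tendsto_cosh_half_decayRate σ hΥ).const_mul (2 * σ * √Υ)).inv₀
    (by positivity)
  have hprod := hprefactor.mul hkernel
  rw [mul_one, mul_ite, mul_one, mul_zero] at hprod
  refine hprod.congr' ?_
  filter_upwards [eventually_gt_atTop 0] with n hn
  rw [matEntry1_inv_Vmat hσ hΥ (natCeil_mul_mem_Icc hs hn) (natCeil_mul_mem_Icc ht hn),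
    ← mul_assoc ((n : ℝ) ^ _), rpow_neg_half_mul_inv_eq hσ hΥ hn,
    mul_assoc (_)⁻¹]

end InverseLimits

section Moments

variable {Ω : Type*} [MeasurableSpace Ω] {P : Measure Ω}

lemma integral_mulVec_apply {m n : Type*} [Fintype n] (A : Matrix m n ℝ) {ξ : Ω → n → ℝ}
    (hξ : ∀ j, Integrable (fun ω => ξ ω j) P) (i : m) :
    ∫ ω, (A *ᵥ ξ ω) i ∂P = (A *ᵥ fun j => ∫ ω, ξ ω j ∂P) i := by
  simp only [Matrix.mulVec, dotProduct]
  rw [integral_finsetSum _ fun j _ => (hξ j).const_mul _]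
  simp only [integral_const_mul]

lemma integral_mulVec_mul_mulVec {m n p : Type*} [Fintype n] (A : Matrix m n ℝ) (B : Matrix p n ℝ)
    {ξ : Ω → n → ℝ} (hξ : ∀ i j, Integrable (fun ω => ξ ω i * ξ ω j) P) (i : m) (j : p) :
    ∫ ω, (A *ᵥ ξ ω) i * (B *ᵥ ξ ω) j ∂P =
      (A * Matrix.of (fun k l => ∫ ω, ξ ω k * ξ ω l ∂P) * Bᵀ) i j := by
  have hexpand (ω : Ω) : (A *ᵥ ξ ω) i * (B *ᵥ ξ ω) j =
      ∑ l, ∑ k, A i k * B j l * (ξ ω k * ξ ω l) := by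
    simp only [Matrix.mulVec, dotProduct, Finset.sum_mul_sum]
    rw [Finset.sum_comm]
    exact Finset.sum_congr rfl fun l _ => Finset.sum_congr rfl fun k _ => by ring
  simp only [hexpand]
  rw [integral_finsetSum _ fun l _ => integrable_finsetSum _ fun k _ => (hξ k l).const_mul _]
  simp only [Matrix.mul_apply, Matrix.transpose_apply, Matrix.of_apply, Finset.sum_mul]
  refine Finset.sum_congr rfl fun l _ => ?_
  rw [integral_finsetSum _ fun k _ => (hξ k l).const_mul _]
  refine Finset.sum_congr rfl fun k _ => ?_
  rw [integral_const_mul]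
  ring

variable {n : ℕ} {ξ : Ω → Fin n → ℝ}

lemma integral_vecEntry1_mulVec (A : Matrix (Fin n) (Fin n) ℝ)
    (hξ : ∀ j, Integrable (fun ω => ξ ω j) P) (i : ℕ) :
    ∫ ω, vecEntry1 (A *ᵥ ξ ω) i ∂P = vecEntry1 (A *ᵥ fun j => ∫ ω, ξ ω j ∂P) i := by
  by_cases hi : 1 ≤ i ∧ i ≤ n
  · simp only [vecEntry1, dif_pos hi, integral_mulVec_apply A hξ]
  · simp [vecEntry1, hi]

lemma integral_vecEntry1_mulVec_mul (A B : Matrix (Fin n) (Fin n) ℝ)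
    (hξ : ∀ i j, Integrable (fun ω => ξ ω i * ξ ω j) P) (i j : ℕ) :
    ∫ ω, vecEntry1 (A *ᵥ ξ ω) i * vecEntry1 (B *ᵥ ξ ω) j ∂P =
      matEntry1 (A * Matrix.of (fun k l => ∫ ω, ξ ω k * ξ ω l ∂P) * Bᵀ) i j := by
  by_cases hi : 1 ≤ i ∧ i ≤ n
  · by_cases hj : 1 ≤ j ∧ j ≤ n
    · simp only [vecEntry1, matEntry1, dif_pos hi, dif_pos hj,
        dif_pos (⟨hi.1, hi.2, hj⟩ : 1 ≤ i ∧ i ≤ n ∧ 1 ≤ j ∧ j ≤ n),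
        integral_mulVec_mul_mulVec A B hξ]
    · simp [vecEntry1, matEntry1, hj]
  · have hij : ¬(1 ≤ i ∧ i ≤ n ∧ 1 ≤ j ∧ j ≤ n) := fun h => hi ⟨h.1, h.2.1⟩
    simp [vecEntry1, matEntry1, hi, hij]

lemma integral_vecEntry1_inv_mulVec_mul {M : Matrix (Fin n) (Fin n) ℝ} (hM : M.PosDef)
    (hξ : ∀ i j, Integrable (fun ω => ξ ω i * ξ ω j) P)
    (hcov : ∀ i j, ∫ ω, ξ ω i * ξ ω j ∂P = M i j) (i j : ℕ) :
    ∫ ω, vecEntry1 (M⁻¹ *ᵥ ξ ω) i * vecEntry1 (M⁻¹ *ᵥ ξ ω) j ∂P = matEntry1 M⁻¹ i j := by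
  have hof : Matrix.of (fun k l => ∫ ω, ξ ω k * ξ ω l ∂P) = M := by ext k l; exact hcov k l
  have hsymm : (M⁻¹)ᵀ = M⁻¹ := hM.isHermitian.inv
  rw [integral_vecEntry1_mulVec_mul _ _ hξ, hof, hsymm,
    Matrix.nonsing_inv_mul _ ((Matrix.isUnit_iff_isUnit_det M).mp hM.isUnit), one_mul]

end Moments

theorem stmt18_general {σ Υ : ℝ} (hσ : 0 < σ) (hΥ : 0 < Υ) {ι : Type*} [DecidableEq ι] {I : Set ι}
    {S : ι → ℝ} (hS : Set.MapsTo S I (Set.Ioo 0 1)) (hinj : Set.InjOn S I) :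
    (∀ n : ℕ, (Vmat σ Υ n).PosDef) ∧
    (∀ k ∈ I, ∀ l ∈ I,
      Tendsto (fun n : ℕ => (n : ℝ) ^ (-(1 / 2) : ℝ) *
          matEntry1 (Vmat σ Υ n)⁻¹ ⌈(n : ℝ) * S k⌉₊ ⌈(n : ℝ) * S l⌉₊)
        atTop (nhds (if k = l then (2 * σ * √Υ)⁻¹ else 0))) ∧
    ∀ {Ω : Type*} [MeasurableSpace Ω] (P : Measure Ω) (ξ : (n : ℕ) → Ω → Fin n → ℝ),
      (∀ n i, Integrable (fun ω => ξ n ω i) P) →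
      (∀ n i j, Integrable (fun ω => ξ n ω i * ξ n ω j) P) →
      (∀ n i, ∫ ω, ξ n ω i ∂P = 0) →
      (∀ n i j, ∫ ω, ξ n ω i * ξ n ω j ∂P = Vmat σ Υ n i j) →
      ∀ γhat : ℕ → ι → Ω → ℝ,
        (∀ n k ω, γhat n k ω = 2 * σ * √Υ * (n : ℝ) ^ (-(1 / 2) : ℝ) *
          vecEntry1 ((Vmat σ Υ n)⁻¹ *ᵥ ξ n ω) ⌈(n : ℝ) * S k⌉₊) →
        ∀ k ∈ I, ∀ l ∈ I,
          Tendsto (fun n : ℕ => √n * ((∫ ω, γhat n k ω * γhat n l ω ∂P) -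
              (∫ ω, γhat n k ω ∂P) * (∫ ω, γhat n l ω ∂P)))
            atTop (nhds (if k = l then 2 * σ * √Υ else 0)) := by
  have hlim (k) (hk : k ∈ I) (l) (hl : l ∈ I) := tendsto_matEntry1_inv_Vmat hσ hΥ (hS hk) (hS hl)
  refine ⟨Vmat_posDef hσ hΥ, fun k hk l hl => ?_, ?_⟩
  · simpa only [hinj.eq_iff hk hl] using hlim k hk l hl
  intro Ω _ P ξ hint hint₂ hmean hcov γhat hγ k hk l hl
  have hmean_γ (n : ℕ) : ∫ ω, γhat n k ω ∂P = 0 := by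
    simp only [hγ, integral_const_mul, integral_vecEntry1_mulVec _ (hint n), hmean]
    simp [vecEntry1, ← Pi.zero_def]
  have hcov_γ (n : ℕ) : (2 * σ * √Υ) ^ 2 * ((n : ℝ) ^ (-(1 / 2) : ℝ) *
        matEntry1 (Vmat σ Υ n)⁻¹ ⌈(n : ℝ) * S k⌉₊ ⌈(n : ℝ) * S l⌉₊) =
      √n * ((∫ ω, γhat n k ω * γhat n l ω ∂P) - (∫ ω, γhat n k ω ∂P) * ∫ ω, γhat n l ω ∂P) := by
    rw [hmean_γ, zero_mul, sub_zero]
    simp only [hγ, mul_mul_mul_comm _ (vecEntry1 _ _)]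
    rw [integral_const_mul,
      integral_vecEntry1_inv_mulVec_mul (Vmat_posDef hσ hΥ n) (hint₂ n) (hcov n)]
    linear_combination -(2 * σ * √Υ) ^ 2 * matEntry1 (Vmat σ Υ n)⁻¹ ⌈n * S k⌉₊ ⌈n * S l⌉₊ *
      sqrt_mul_rpow_neg_half_sq n.cast_nonneg
  have hprod := (hlim k hk l hl).const_mul ((2 * σ * √Υ) ^ 2)
  have hconst : (2 * σ * √Υ) ^ 2 * (2 * σ * √Υ)⁻¹ = 2 * σ * √Υ := by field_simp
  rw [mul_ite, mul_zero, hconst] at hprod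
  simpa only [hinj.eq_iff hk hl, hcov_γ] using hprod

/-- `V_n(σ)` is positive definite, `n^{-1/2}(V_n(σ)^{-1})_{i(k),i(l)} → (2σ√Υ)^{-1}1_{k=l}`
with `i(k) = ⌈nS_k⌉`, and consequently, for centered random vectors `ξ_n` with covariance
matrix `V_n(σ)` (e.g. `ξ_n ∼ N(0,V_n(σ))`) and
`γ̂^n_k = 2σ√Υ n^{-1/2}(V_n(σ)^{-1}ξ_n)_{i(k)}`, one has
`√n Cov(γ̂^n_k, γ̂^n_l) → 2σ√Υ 1_{k=l}`. -/
theorem stmt18 (σ Υ : ℝ) (hσ : 0 < σ) (hΥ : 0 < Υ)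
    (K : ℕ) (hK : 1 ≤ K) (S : ℕ → ℝ)
    (hS0 : 0 < S 1) (hSK : S K < 1)
    (hSmono : ∀ k l, 1 ≤ k → k < l → l ≤ K → S k < S l) :
    (∀ n : ℕ, (Vmat σ Υ n).PosDef) ∧
    (∀ k l : ℕ, 1 ≤ k → k ≤ K → 1 ≤ l → l ≤ K →
      Tendsto (fun n : ℕ =>
          ((n : ℝ)) ^ (-(1 / 2) : ℝ) *
            matEntry1 (Vmat σ Υ n)⁻¹ ⌈(n : ℝ) * S k⌉₊ ⌈(n : ℝ) * S l⌉₊)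
        atTop (nhds (if k = l then (2 * σ * Real.sqrt Υ)⁻¹ else 0))) ∧
    ∀ {Ω : Type} [MeasurableSpace Ω] (P : Measure Ω), IsProbabilityMeasure P →
      ∀ ξ : (n : ℕ) → Ω → Fin n → ℝ,
        (∀ n i, Integrable (fun ω => ξ n ω i) P) →
        (∀ n i j, Integrable (fun ω => ξ n ω i * ξ n ω j) P) →
        (∀ n i, (∫ ω, ξ n ω i ∂P) = 0) →
        (∀ n i j, (∫ ω, ξ n ω i * ξ n ω j ∂P) = Vmat σ Υ n i j) →
        ∀ γhat : ℕ → ℕ → Ω → ℝ,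
          (∀ n k ω, γhat n k ω = 2 * σ * Real.sqrt Υ * ((n : ℝ)) ^ (-(1 / 2) : ℝ) *
            vecEntry1 ((Vmat σ Υ n)⁻¹ *ᵥ ξ n ω) ⌈(n : ℝ) * S k⌉₊) →
          ∀ k l : ℕ, 1 ≤ k → k ≤ K → 1 ≤ l → l ≤ K →
            Tendsto (fun n : ℕ => Real.sqrt n *
                ((∫ ω, γhat n k ω * γhat n l ω ∂P)
                  - (∫ ω, γhat n k ω ∂P) * (∫ ω, γhat n l ω ∂P)))
              atTop (nhds (if k = l then 2 * σ * Real.sqrt Υ else 0)) := by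
  have hS : StrictMonoOn S (Set.Icc 1 K) := fun k hk l hl hkl => hSmono k l hk.1 hkl hl.2
  obtain ⟨hpos, hinv, hcov⟩ := stmt18_general hσ hΥ
    (hS.monotoneOn.mapsTo_Icc.mono_right (Set.Icc_subset_Ioo hS0 hSK)) hS.injOn
  exact ⟨hpos, fun k l hk hkK hl hlK => hinv k ⟨hk, hkK⟩ l ⟨hl, hlK⟩,
    fun P _ ξ hint hint₂ hmean hV γhat hγ k l hk hkK hl hlK =>
      hcov P ξ hint hint₂ hmean hV γhat hγ k ⟨hk, hkK⟩ l ⟨hl, hlK⟩⟩
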